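/- Let v ∈ L^∞(ℝ²×ℝ;ℝ²), b ∈ L^∞(ℝ²×ℝ;ℝ) and p ∈ L^∞(ℝ²×ℝ;ℝ) satisfy: for every Ψ' ∈ C_c^∞(ℝ²×ℝ;ℝ²), ∫∫ (v·∂_tΨ' + (v⊗v):∇_xΨ' + p div_xΨ') dx dt = 0; for every φ' ∈ C_c^∞(ℝ²×ℝ;ℝ), ∫∫ (b ∂_tφ' + b v·∇_xφ') dx dt = 0 and ∫∫ v·∇_xφ' dx dt = 0. Define u(x₁,x₂,x₃,t) := (v₁(x₁,x₂,t), v₂(x₁,x₂,t), 0), B(x₁,x₂,x₃,t) := (0, 0, b(x₁,x₂,t)), and P(x₁,x₂,x₃,t) := p(x₁,x₂,t). Then (u, B, P) satisfies the weak formulation of the 3D ideal MHD equations: for every Ψ ∈ C_c^∞(ℝ³×ℝ;ℝ³), ∫∫ (u·∂_tΨ + (u⊗u − B⊗B):∇_xΨ + P div_xΨ) dx dt = 0; for every Φ ∈ C_c^∞(ℝ³×ℝ;ℝ³), ∫∫ (B·∂_tΦ + (u×B)·curl_xΦ) dx dt = 0; and for every φ ∈ C_c^∞(ℝ³×ℝ;ℝ),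 ∫∫ u·∇_xφ dx dt = 0 and ∫∫ B·∇_xφ dx dt = 0. -/

import Mathlib

/-!
The 3D equations follow from the 2D ones by slicing the 3D test functions at fixed `x₃`, so no
averaging of test functions in `x₃` is needed.

Each 3D weak integrand splits into two parts. The part without `∂₃` is, on every slice
`x₃ = s`, exactly a 2D weak integrand tested against the restriction of the 3D test function to
the slice, which is again smooth and compactly supported; by Fubini its integral vanishes
(`integral_eq_zero_of_slices`). The part with `∂₃` is a sum of terms `g(x₁, x₂, t) ∂₃ψ` with `g`
bounded and `ψ` a component of the test function; integrating first in `x₃` gives zero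
(`integral_coeff_mul_d3`). For the momentum equation the second part is `(p - b²) ∂₃Ψ₃`, and for
the induction equation it is `-b v₁ ∂₃Φ₁ - b v₂ ∂₃Φ₂`, while `b ∂ₜΦ₃ + b v·∇Φ₃` is the tracer
equation tested with the slices of `Φ₃`.
-/

open MeasureTheory Filter Topology

noncomputable section

/-- Cross product of two vectors in `ℝ³`. -/
def cross3 (a c : Fin 3 → ℝ) : Fin 3 → ℝ :=
  ![a 1 * c 2 - a 2 * c 1, a 2 * c 0 - a 0 * c 2, a 0 * c 1 - a 1 * c 0]

/-- Spatial curl of a vector field `Φ : ℝ³ × ℝ → ℝ³` (the last coordinate is time). -/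
noncomputable def curlx (Φ : (Fin 3 → ℝ) × ℝ → Fin 3 → ℝ) (y : (Fin 3 → ℝ) × ℝ) :
    Fin 3 → ℝ :=
  ![fderiv ℝ Φ y (Pi.single 1 1, (0 : ℝ)) 2 - fderiv ℝ Φ y (Pi.single 2 1, (0 : ℝ)) 1,
    fderiv ℝ Φ y (Pi.single 2 1, (0 : ℝ)) 0 - fderiv ℝ Φ y (Pi.single 0 1, (0 : ℝ)) 2,
    fderiv ℝ Φ y (Pi.single 0 1, (0 : ℝ)) 1 - fderiv ℝ Φ y (Pi.single 1 1, (0 : ℝ)) 0]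

/-- Projection `((x₁,x₂,x₃),t) ↦ ((x₁,x₂),t)`. -/
def projxy (y : (Fin 3 → ℝ) × ℝ) : (Fin 2 → ℝ) × ℝ :=
  (fun i : Fin 2 => y.1 i.castSucc, y.2)

/-- The linear map `(((x₁,x₂),t),x₃) ↦ ((x₁,x₂,x₃),t)`, a right inverse of `projxy` for each
fixed `x₃`. -/
def liftL : (((Fin 2 → ℝ) × ℝ) × ℝ) →L[ℝ] (Fin 3 → ℝ) × ℝ :=
  LinearMap.toContinuousLinearMap
    { toFun := fun q => (![q.1.1 0, q.1.1 1, q.2], q.1.2)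
      map_add' := fun q r => by
        ext i
        · fin_cases i <;> simp
        · simp
      map_smul' := fun c q => by
        ext i
        · fin_cases i <;> simp
        · simp }

lemma liftL_apply (q : ((Fin 2 → ℝ) × ℝ) × ℝ) :
    liftL q = (![q.1.1 0, q.1.1 1, q.2], q.1.2) := rfl

lemma projxy_liftL (z : (Fin 2 → ℝ) × ℝ) (s : ℝ) : projxy (liftL (z, s)) = z := by
  ext i
  · fin_cases i <;> simp [projxy, liftL_apply]
  · simp [projxy, liftL_apply]

lemma continuous_projxy : Continuous projxy := by
  unfold projxy
  fun_prop

lemma liftL_time : liftL (((0 : Fin 2 → ℝ), (1 : ℝ)), 0) = ((0 : Fin 3 → ℝ), (1 : ℝ)) := by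
  rw [liftL_apply]
  ext i
  · fin_cases i <;> simp
  · simp

lemma liftL_single (j : Fin 2) :
    liftL (((Pi.single j 1 : Fin 2 → ℝ), (0 : ℝ)), 0)
      = ((Pi.single j.castSucc 1 : Fin 3 → ℝ), (0 : ℝ)) := by
  rw [liftL_apply]
  ext i
  · fin_cases i <;> fin_cases j <;> simp
  · simp

lemma liftL_last :
    liftL (((0 : Fin 2 → ℝ), (0 : ℝ)), 1) = ((Pi.single 2 1 : Fin 3 → ℝ), (0 : ℝ)) := by
  rw [liftL_apply]
  ext i
  · fin_cases i <;> simp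
  · simp

lemma measurePreserving_liftL : MeasurePreserving (fun q => liftL q) := by
  have h1 : MeasurePreserving (Prod.swap : ((Fin 2 → ℝ) × ℝ) × ℝ → ℝ × ((Fin 2 → ℝ) × ℝ)) :=
    Measure.measurePreserving_swap
  have h2 : MeasurePreserving
      (MeasurableEquiv.prodAssoc.symm : ℝ × ((Fin 2 → ℝ) × ℝ) ≃ᵐ (ℝ × (Fin 2 → ℝ)) × ℝ) :=
    (volume_preserving_prodAssoc (α₁ := ℝ) (β₁ := Fin 2 → ℝ) (γ₁ := ℝ)).symm
  have h3 := (volume_preserving_piFinSuccAbove (fun _ : Fin 3 => ℝ) (Fin.last 2)).symm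
  have h4 := h3.prod (MeasurePreserving.id (volume : Measure ℝ))
  have h5 := (h4.comp h2).comp h1
  convert! h5 using 1
  funext q
  rw [liftL_apply]
  ext i
  · fin_cases i <;> rfl
  · rfl

lemma integral_eq_liftL {F : (Fin 3 → ℝ) × ℝ → ℝ} (hF : Integrable F) :
    ∫ y, F y = ∫ q, F (liftL q) := by
  have h := measurePreserving_liftL
  rw [← h.map_eq, integral_map h.measurable.aemeasurable]
  rw [h.map_eq]
  exact hF.aestronglyMeasurable

/-- Fubini, outer variable `x₃`. Integrability is not needed, since the integral of a
non-integrable function is `0` by convention. -/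
lemma integral_eq_zero_of_slices {F : (Fin 3 → ℝ) × ℝ → ℝ}
    (h : ∀ s : ℝ, ∫ z, F (liftL (z, s)) = 0) : ∫ y, F y = 0 := by
  by_cases hF : Integrable F
  · have hF' : Integrable (fun q => F (liftL q)) :=
      measurePreserving_liftL.integrable_comp_of_integrable hF
    rw [integral_eq_liftL hF, Measure.volume_eq_prod, integral_prod_symm _ hF']
    simp [h]
  · exact integral_undef hF

/-- Fubini, inner variable `x₃`. -/
lemma integral_eq_zero_of_fibers {F : (Fin 3 → ℝ) × ℝ → ℝ}
    (h : ∀ z, ∫ s : ℝ, F (liftL (z, s)) = 0) : ∫ y, F y = 0 := by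
  by_cases hF : Integrable F
  · have hF' : Integrable (fun q => F (liftL q)) :=
      measurePreserving_liftL.integrable_comp_of_integrable hF
    rw [integral_eq_liftL hF, Measure.volume_eq_prod, integral_prod _ hF']
    simp [h]
  · exact integral_undef hF

/-- A sum has zero integral if both summands do and the second one is integrable. If the first
is not integrable, then neither is the sum, whose integral is then `0` by convention. -/
lemma integral_add_eq_zero {α : Type*} [MeasurableSpace α] {μ : Measure α} {F G : α → ℝ}
    (hF : ∫ y, F y ∂μ = 0) (hGi : Integrable G μ) (hG : ∫ y, G y ∂μ = 0) :
    ∫ y, (F y + G y) ∂μ = 0 := by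
  by_cases hFi : Integrable F μ
  · rw [integral_add hFi hGi, hF, hG, add_zero]
  · refine integral_undef fun h => hFi ?_
    exact (h.sub hGi).congr (.of_forall fun y => by simp)

lemma slice_contDiff {E : Type*} [NormedAddCommGroup E] [NormedSpace ℝ E]
    {Φ : (Fin 3 → ℝ) × ℝ → E} (hΦ : ContDiff ℝ (⊤ : ℕ∞) Φ) (s : ℝ) :
    ContDiff ℝ (⊤ : ℕ∞) (fun z => Φ (liftL (z, s))) :=
  hΦ.comp (liftL.contDiff.comp (contDiff_id.prodMk contDiff_const))

lemma slice_hasCompactSupport {E : Type*} [NormedAddCommGroup E]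
    {Φ : (Fin 3 → ℝ) × ℝ → E} (hΦ : HasCompactSupport Φ) (s : ℝ) :
    HasCompactSupport (fun z => Φ (liftL (z, s))) := by
  have h : Function.LeftInverse projxy (fun z => liftL (z, s)) := fun z => projxy_liftL z s
  exact hΦ.comp_isClosedEmbedding (h.isClosedEmbedding continuous_projxy (by fun_prop))

lemma slice_fderiv {E : Type*} [NormedAddCommGroup E] [NormedSpace ℝ E]
    {Φ : (Fin 3 → ℝ) × ℝ → E} (hΦ : ContDiff ℝ (⊤ : ℕ∞) Φ) (s : ℝ)
    (z w : (Fin 2 → ℝ) × ℝ) :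
    fderiv ℝ (fun z => Φ (liftL (z, s))) z w = fderiv ℝ Φ (liftL (z, s)) (liftL (w, 0)) := by
  have h1 : HasFDerivAt Φ (fderiv ℝ Φ (liftL (z, s))) (liftL (z, s)) :=
    (hΦ.differentiable (by simp) _).hasFDerivAt
  have h2 := (hasFDerivAt_id (𝕜 := ℝ) z).prodMk (hasFDerivAt_const (𝕜 := ℝ) s z)
  have h3 := h1.comp z (liftL.hasFDerivAt.comp z h2)
  have h4 : fderiv ℝ (fun z => Φ (liftL (z, s))) z = _ := h3.fderiv
  rw [h4]
  simp

lemma fderiv_component {m n : ℕ} {Φ : (Fin m → ℝ) × ℝ → Fin n → ℝ}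
    (hΦ : ContDiff ℝ (⊤ : ℕ∞) Φ) (y w : (Fin m → ℝ) × ℝ) (i : Fin n) :
    fderiv ℝ Φ y w i = fderiv ℝ (fun y => Φ y i) y w := by
  rw [fderiv_apply (hΦ.differentiable (by simp) y)]
  rfl

lemma component_contDiff {m n : ℕ} {Φ : (Fin m → ℝ) × ℝ → Fin n → ℝ}
    (hΦ : ContDiff ℝ (⊤ : ℕ∞) Φ) (i : Fin n) : ContDiff ℝ (⊤ : ℕ∞) (fun y => Φ y i) :=
  contDiff_pi.1 hΦ i

lemma component_hasCompactSupport {m n : ℕ} {Φ : (Fin m → ℝ) × ℝ → Fin n → ℝ}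
    (hΦ : HasCompactSupport Φ) (i : Fin n) : HasCompactSupport (fun y => Φ y i) :=
  hΦ.comp_left (g := fun a : Fin n → ℝ => a i) rfl

lemma integrable_coeff_mul_fderiv {g : (Fin 2 → ℝ) × ℝ → ℝ} (hg : Measurable g) {C : ℝ}
    (hC : ∀ z, |g z| ≤ C) {φ : (Fin 3 → ℝ) × ℝ → ℝ} (hφ : ContDiff ℝ (⊤ : ℕ∞) φ)
    (hc : HasCompactSupport φ) (w : (Fin 3 → ℝ) × ℝ) :
    Integrable (fun y => g (projxy y) * fderiv ℝ φ y w) := by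
  have hcont : Continuous (fun y => fderiv ℝ φ y w) :=
    (hφ.continuous_fderiv (by simp)).clm_apply continuous_const
  exact (hcont.integrable_of_hasCompactSupport (hc.fderiv_apply (𝕜 := ℝ) w)).bdd_mul
    (hg.comp continuous_projxy.measurable).aestronglyMeasurable (.of_forall fun y => hC _)

/-- `∫ ∂₃φ dx₃ = 0` on each line parallel to the `x₃`-axis, and the coefficient `g` is constant
on such lines. -/
lemma integral_coeff_mul_d3 (g : (Fin 2 → ℝ) × ℝ → ℝ) {φ : (Fin 3 → ℝ) × ℝ → ℝ}
    (hφ : ContDiff ℝ (⊤ : ℕ∞) φ) (hc : HasCompactSupport φ) :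
    ∫ y, g (projxy y) * fderiv ℝ φ y (Pi.single 2 1, (0 : ℝ)) = 0 := by
  refine integral_eq_zero_of_fibers fun z => ?_
  simp only [projxy_liftL]
  rw [integral_const_mul]
  have hemb : IsClosedEmbedding (fun s : ℝ => liftL (z, s)) := by
    have h : Function.LeftInverse (fun y : (Fin 3 → ℝ) × ℝ => y.1 2)
        (fun s : ℝ => liftL (z, s)) := fun s => by simp [liftL_apply]
    exact h.isClosedEmbedding (by fun_prop) (by fun_prop)
  have hderiv : ∀ s : ℝ, HasDerivAt (fun s => φ (liftL (z, s)))
      (fderiv ℝ φ (liftL (z, s)) (Pi.single 2 1, (0 : ℝ))) s := fun s => by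
    have h2 : HasDerivAt (fun s : ℝ => (z, s)) (0, 1) s :=
      (hasDerivAt_const s z).prodMk (hasDerivAt_id s)
    have h3 := liftL.hasFDerivAt.comp_hasDerivAt s h2
    have h4 := (hφ.differentiable (by simp) (liftL (z, s))).hasFDerivAt.comp_hasDerivAt s h3
    rw [← liftL_last]
    exact h4
  have hcont : Continuous (fun y => fderiv ℝ φ y (Pi.single 2 1, (0 : ℝ))) :=
    (hφ.continuous_fderiv (by simp)).clm_apply continuous_const
  have hz := integral_eq_zero_of_hasDerivAt_of_integrable hderiv
    ((hcont.comp hemb.continuous).integrable_of_hasCompactSupport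
      ((hc.fderiv_apply (𝕜 := ℝ) _).comp_isClosedEmbedding hemb))
    ((hφ.continuous.comp hemb.continuous).integrable_of_hasCompactSupport
      (hc.comp_isClosedEmbedding hemb))
  rw [hz, mul_zero]

/-- If `(v, b, p)` is a bounded weak solution of the 2D incompressible Euler
equations with a passive tracer, then `u := (v₁, v₂, 0)`, `B := (0, 0, b)`, `P := p`
(extended independently of `x₃`) form a weak solution of the ideal 3D MHD equations. -/
theorem stmt_2
    (v : (Fin 2 → ℝ) × ℝ → Fin 2 → ℝ) (b p : (Fin 2 → ℝ) × ℝ → ℝ)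
    (hvm : Measurable v) (hbm : Measurable b) (hpm : Measurable p)
    (hbdd : ∃ C : ℝ, ∀ y, ‖v y‖ ≤ C ∧ |b y| ≤ C ∧ |p y| ≤ C)
    -- weak 2D momentum equation
    (hmom2 : ∀ Ψ' : (Fin 2 → ℝ) × ℝ → Fin 2 → ℝ, ContDiff ℝ (⊤ : ℕ∞) Ψ' → HasCompactSupport Ψ' →
      ∫ y, ((∑ i, v y i * fderiv ℝ Ψ' y ((0 : Fin 2 → ℝ), (1 : ℝ)) i)
          + (∑ i, ∑ j, v y i * v y j * fderiv ℝ Ψ' y (Pi.single j 1, (0 : ℝ)) i)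
          + p y * ∑ j, fderiv ℝ Ψ' y (Pi.single j 1, (0 : ℝ)) j) = 0)
    -- weak 2D tracer equation
    (htr2 : ∀ φ' : (Fin 2 → ℝ) × ℝ → ℝ, ContDiff ℝ (⊤ : ℕ∞) φ' → HasCompactSupport φ' →
      ∫ y, (b y * fderiv ℝ φ' y ((0 : Fin 2 → ℝ), (1 : ℝ))
          + b y * ∑ j, v y j * fderiv ℝ φ' y (Pi.single j 1, (0 : ℝ))) = 0)
    -- weak 2D incompressibility
    (hdiv2 : ∀ φ' : (Fin 2 → ℝ) × ℝ → ℝ, ContDiff ℝ (⊤ : ℕ∞) φ' → HasCompactSupport φ' →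
      ∫ y, (∑ j, v y j * fderiv ℝ φ' y (Pi.single j 1, (0 : ℝ))) = 0)
    (u B : (Fin 3 → ℝ) × ℝ → Fin 3 → ℝ) (P : (Fin 3 → ℝ) × ℝ → ℝ)
    (hu : u = fun y => ![v (projxy y) 0, v (projxy y) 1, 0])
    (hB : B = fun y => ![0, 0, b (projxy y)])
    (hP : P = fun y => p (projxy y)) :
    -- weak 3D momentum equation ∂ₜ u + div (u ⊗ u − B ⊗ B) + ∇P = 0
    (∀ Ψ : (Fin 3 → ℝ) × ℝ → Fin 3 → ℝ, ContDiff ℝ (⊤ : ℕ∞) Ψ → HasCompactSupport Ψ →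
      ∫ y, ((∑ i, u y i * fderiv ℝ Ψ y ((0 : Fin 3 → ℝ), (1 : ℝ)) i)
          + (∑ i, ∑ j, (u y i * u y j - B y i * B y j) *
              fderiv ℝ Ψ y (Pi.single j 1, (0 : ℝ)) i)
          + P y * ∑ j, fderiv ℝ Ψ y (Pi.single j 1, (0 : ℝ)) j) = 0) ∧
    -- weak 3D induction (Faraday) equation ∂ₜ B − curl (u × B) = 0
    (∀ Φ : (Fin 3 → ℝ) × ℝ → Fin 3 → ℝ, ContDiff ℝ (⊤ : ℕ∞) Φ → HasCompactSupport Φ →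
      ∫ y, ((∑ i, B y i * fderiv ℝ Φ y ((0 : Fin 3 → ℝ), (1 : ℝ)) i)
          + ∑ i, cross3 (u y) (B y) i * curlx Φ y i) = 0) ∧
    -- weak form of div u = 0
    (∀ φ : (Fin 3 → ℝ) × ℝ → ℝ, ContDiff ℝ (⊤ : ℕ∞) φ → HasCompactSupport φ →
      ∫ y, (∑ j, u y j * fderiv ℝ φ y (Pi.single j 1, (0 : ℝ))) = 0) ∧
    -- weak form of div B = 0
    (∀ φ : (Fin 3 → ℝ) × ℝ → ℝ, ContDiff ℝ (⊤ : ℕ∞) φ → HasCompactSupport φ →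
      ∫ y, (∑ j, B y j * fderiv ℝ φ y (Pi.single j 1, (0 : ℝ))) = 0) := by
  subst hu hB hP
  obtain ⟨C, hC⟩ := hbdd
  have hC0 : 0 ≤ C := (abs_nonneg _).trans (hC 0).2.1
  have hv : ∀ i z, |v z i| ≤ C := fun i z => (norm_le_pi_norm (v z) i).trans (hC z).1
  have hvi : ∀ i, Measurable fun z => v z i := fun i => (measurable_pi_apply i).comp hvm
  refine ⟨fun Ψ hΨ hΨc => ?_, fun Φ hΦ hΦc => ?_, fun φ hφ hφc => ?_, fun φ hφ hφc => ?_⟩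
  · have hF : ∫ y, ((∑ i : Fin 2, v (projxy y) i *
            fderiv ℝ Ψ y ((0 : Fin 3 → ℝ), (1 : ℝ)) i.castSucc)
          + (∑ i : Fin 2, ∑ j : Fin 2, v (projxy y) i * v (projxy y) j *
              fderiv ℝ Ψ y (Pi.single j.castSucc 1, (0 : ℝ)) i.castSucc)
          + p (projxy y) *
            ∑ j : Fin 2, fderiv ℝ Ψ y (Pi.single j.castSucc 1, (0 : ℝ)) j.castSucc) = 0 := by
      refine integral_eq_zero_of_slices fun s => ?_
      have hs : ContDiff ℝ (⊤ : ℕ∞) (fun z (i : Fin 2) => Ψ (liftL (z, s)) i.castSucc) :=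
        contDiff_pi.2 fun i => slice_contDiff (component_contDiff hΨ i.castSucc) s
      have hsc : HasCompactSupport (fun z (i : Fin 2) => Ψ (liftL (z, s)) i.castSucc) :=
        (slice_hasCompactSupport hΨc s).comp_left
          (g := fun (a : Fin 3 → ℝ) (i : Fin 2) => a i.castSucc) rfl
      have key : ∀ z w (i : Fin 2),
          fderiv ℝ (fun z (i : Fin 2) => Ψ (liftL (z, s)) i.castSucc) z w i
            = fderiv ℝ Ψ (liftL (z, s)) (liftL (w, 0)) i.castSucc := fun z w i => by
        rw [fderiv_component hs, fderiv_component hΨ]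
        exact slice_fderiv (component_contDiff hΨ i.castSucc) s z w
      have h := hmom2 _ hs hsc
      simp only [key, liftL_time, liftL_single] at h
      simpa only [projxy_liftL] using h
    have hgm : Measurable fun z => p z - b z * b z := hpm.sub (hbm.mul hbm)
    have hgb : ∀ z, |p z - b z * b z| ≤ C + C * C := fun z => by
      refine (abs_sub _ _).trans (add_le_add (hC z).2.2 ?_)
      rw [abs_mul]
      exact mul_le_mul (hC z).2.1 (hC z).2.1 (abs_nonneg _) hC0
    have h := integral_add_eq_zero hF
      (integrable_coeff_mul_fderiv hgm hgb (component_contDiff hΨ 2)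
        (component_hasCompactSupport hΨc 2) (Pi.single 2 1, (0 : ℝ)))
      (integral_coeff_mul_d3 (fun z => p z - b z * b z) (component_contDiff hΨ 2)
        (component_hasCompactSupport hΨc 2))
    refine Eq.trans ?_ h
    refine integral_congr_ae (.of_forall fun y => ?_)
    simp only [← fderiv_component hΨ, Fin.sum_univ_three, Fin.sum_univ_two]
    simp
    ring
  · have hF : ∫ y, (b (projxy y) * fderiv ℝ (fun y => Φ y 2) y ((0 : Fin 3 → ℝ), (1 : ℝ))
          + b (projxy y) * ∑ j : Fin 2, v (projxy y) j *
              fderiv ℝ (fun y => Φ y 2) y (Pi.single j.castSucc 1, (0 : ℝ))) = 0 := by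
      refine integral_eq_zero_of_slices fun s => ?_
      have h := htr2 _ (slice_contDiff (component_contDiff hΦ 2) s)
        (slice_hasCompactSupport (component_hasCompactSupport hΦc 2) s)
      simp only [slice_fderiv (component_contDiff hΦ 2), liftL_time, liftL_single] at h
      simpa only [projxy_liftL] using h
    have hgm : ∀ i, Measurable fun z => -(b z * v z i) := fun i => (hbm.mul (hvi i)).neg
    have hgb : ∀ i z, |-(b z * v z i)| ≤ C * C := fun i z => by
      rw [abs_neg, abs_mul]
      exact mul_le_mul (hC z).2.1 (hv i z) (abs_nonneg _) hC0
    have hG : ∀ (i : Fin 2) (k : Fin 3), Integrable (fun y => -(b (projxy y) * v (projxy y) i) *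
        fderiv ℝ (fun y => Φ y k) y (Pi.single 2 1, (0 : ℝ))) := fun i k =>
      integrable_coeff_mul_fderiv (hgm i) (hgb i) (component_contDiff hΦ k)
        (component_hasCompactSupport hΦc k) _
    have hG0 : ∀ (i : Fin 2) (k : Fin 3), ∫ y, -(b (projxy y) * v (projxy y) i) *
        fderiv ℝ (fun y => Φ y k) y (Pi.single 2 1, (0 : ℝ)) = 0 := fun i k =>
      integral_coeff_mul_d3 (fun z => -(b z * v z i)) (component_contDiff hΦ k)
        (component_hasCompactSupport hΦc k)
    have h := integral_add_eq_zero (integral_add_eq_zero hF (hG 0 0) (hG0 0 0))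
      (hG 1 1) (hG0 1 1)
    refine Eq.trans ?_ h
    refine integral_congr_ae (.of_forall fun y => ?_)
    simp only [← fderiv_component hΦ, Fin.sum_univ_three, Fin.sum_univ_two, cross3, curlx]
    simp
    ring
  · have hF : ∫ y, (∑ j : Fin 2, v (projxy y) j *
        fderiv ℝ φ y (Pi.single j.castSucc 1, (0 : ℝ))) = 0 := by
      refine integral_eq_zero_of_slices fun s => ?_
      have h := hdiv2 _ (slice_contDiff hφ s) (slice_hasCompactSupport hφc s)
      simp only [slice_fderiv hφ, liftL_single] at h
      simpa only [projxy_liftL] using h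
    refine Eq.trans ?_ hF
    refine integral_congr_ae (.of_forall fun y => ?_)
    simp [Fin.sum_univ_three, Fin.sum_univ_two]
  · refine Eq.trans ?_ (integral_coeff_mul_d3 b hφ hφc)
    refine integral_congr_ae (.of_forall fun y => ?_)
    simp [Fin.sum_univ_three]
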